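/- arXiv:2301.13710 — 3 statements merged into one kernel-verified Lean document; each statement's English description precedes it below -/
import Mathlib

section
/- Let q* > 0, γ ∈ (0,1], σ_α ≥ 0, σ_b ≥ 0, and let φ : ℝ → ℝ be continuously differentiable with both φ and φ′ of at most polynomial growth. Then for every c ∈ (−1,1) the correlation map C is differentiable at c, with C′(c) = γ σ_α² ∫∫ φ′(√q* z₁) φ′(√q*(c z₁ + √(1−c²) z₂)) Dz₁ Dz₂. -/
open MeasureTheory ProbabilityTheory Filter
open scoped NNReal ENNReal

lemma integrable_one_add_abs_pow_gaussianReal (n : ℕ) :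
    Integrable (fun x : ℝ => (1 + |x|) ^ n) (gaussianReal 0 1) := by
  have h : MemLp (fun x : ℝ => 1 + |x|) (n : ℝ≥0∞) (gaussianReal 0 1) :=
    MemLp.add (f := fun _ : ℝ => (1 : ℝ)) (g := fun x : ℝ => |x|) (memLp_const 1)
      (memLp_id_gaussianReal' (n : ℝ≥0∞) (ENNReal.natCast_ne_top n)).norm
  refine h.integrable_norm_pow'.congr (ae_of_all _ fun x => ?_)
  have : 0 ≤ 1 + |x| := by positivity
  simp only [Real.norm_eq_abs, abs_of_nonneg this]

lemma integrable_gaussianReal_of_le_pow {g : ℝ → ℝ} (hg : Continuous g) {K : ℝ} {n : ℕ}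
    (hK : ∀ x, |g x| ≤ K * (1 + |x|) ^ n) : Integrable g (gaussianReal 0 1) :=
  ((integrable_one_add_abs_pow_gaussianReal n).const_mul K).mono' hg.aestronglyMeasurable
    (ae_of_all _ hK)

lemma integrable_one_add_abs_mul_pow_gaussianReal_prod (n : ℕ) :
    Integrable (fun p : ℝ × ℝ => ((1 + |p.1|) * (1 + |p.2|)) ^ n)
      ((gaussianReal 0 1).prod (gaussianReal 0 1)) := by
  simp_rw [mul_pow]
  exact (integrable_one_add_abs_pow_gaussianReal n).mul_prod
    (integrable_one_add_abs_pow_gaussianReal n)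

lemma integrable_gaussianReal_prod_of_le_pow {g : ℝ × ℝ → ℝ} (hg : Continuous g) {K : ℝ} {n : ℕ}
    (hK : ∀ p, |g p| ≤ K * ((1 + |p.1|) * (1 + |p.2|)) ^ n) :
    Integrable g ((gaussianReal 0 1).prod (gaussianReal 0 1)) :=
  ((integrable_one_add_abs_mul_pow_gaussianReal_prod n).const_mul K).mono'
    hg.aestronglyMeasurable (ae_of_all _ hK)

/-- Stein's identity for the standard Gaussian. -/
lemma integral_id_mul_gaussianReal_eq_integral_deriv {g g' : ℝ → ℝ}
    (hg : ∀ x, HasDerivAt g (g' x) x) (hint : Integrable g (gaussianReal 0 1))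
    (hint' : Integrable g' (gaussianReal 0 1))
    (hxint : Integrable (fun x => x * g x) (gaussianReal 0 1)) :
    ∫ x, x * g x ∂(gaussianReal 0 1) = ∫ x, g' x ∂(gaussianReal 0 1) := by
  have hvol : ∀ {f : ℝ → ℝ}, Integrable f (gaussianReal 0 1) →
      Integrable (fun x => f x * gaussianPDFReal 0 1 x) := by
    intro f hf
    rw [gaussianReal_of_var_ne_zero _ one_ne_zero,
      integrable_withDensity_iff (measurable_gaussianPDF _ _)
        (ae_of_all _ fun _ => gaussianPDF_lt_top)] at hf
    simpa only [toReal_gaussianPDF] using hf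
  have hpdf : ∀ x, HasDerivAt (gaussianPDFReal 0 1) (-x * gaussianPDFReal 0 1 x) x := by
    intro x
    rw [gaussianPDFReal_def]
    have h : HasDerivAt (fun x : ℝ => -(x - 0) ^ 2 / (2 * ((1 : ℝ≥0) : ℝ))) (-x) x := by
      convert! ((((hasDerivAt_id x).sub_const 0).pow 2).neg.div_const (2 * ((1 : ℝ≥0) : ℝ)))
        using 1
      simp
      ring
    convert! h.exp.const_mul _ using 1
    ring
  have key := integral_mul_deriv_eq_deriv_mul_of_integrable (u := g) (u' := g')
    (v := gaussianPDFReal 0 1) (v' := fun x => -x * gaussianPDFReal 0 1 x)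
    (fun x _ => hg x) (fun x _ => hpdf x)
    ((hvol hxint).neg.congr (ae_of_all _ fun x => by
      simp only [Pi.neg_apply, Pi.mul_apply]; ring))
    (hvol hint') (hvol hint)
  simp only [integral_gaussianReal_eq_integral_smul one_ne_zero, smul_eq_mul]
  calc ∫ x, gaussianPDFReal 0 1 x * (x * g x)
      = -∫ x, g x * (-x * gaussianPDFReal 0 1 x) := by
        rw [← integral_neg]; congr 1; ext x; ring
    _ = ∫ x, gaussianPDFReal 0 1 x * g' x := by
        rw [key, neg_neg]; simp only [mul_comm]

/-- The standard Gaussian measure on the plane is invariant under reflections. -/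
lemma measurePreserving_reflection_gaussianReal_prod {c s : ℝ} (hcs : c ^ 2 + s ^ 2 = 1) :
    MeasurePreserving (fun p : ℝ × ℝ => (c * p.1 + s * p.2, s * p.1 - c * p.2))
      ((gaussianReal 0 1).prod (gaussianReal 0 1))
      ((gaussianReal 0 1).prod (gaussianReal 0 1)) := by
  obtain ⟨θ, hc, hs⟩ : ∃ θ : ℝ, Real.cos θ = c ∧ Real.sin θ = s := by
    have hz : ‖(⟨c, s⟩ : ℂ)‖ = 1 := by
      rw [Complex.norm_eq_sqrt_sq_add_sq, hcs, Real.sqrt_one]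
    have hz0 : (⟨c, s⟩ : ℂ) ≠ 0 := by
      rw [← norm_ne_zero_iff, hz]; exact one_ne_zero
    refine ⟨Complex.arg ⟨c, s⟩, ?_, ?_⟩
    · rw [Complex.cos_arg hz0, hz, div_one]
    · rw [Complex.sin_arg, hz, div_one]
  have hrot : MeasurePreserving (ContinuousLinearMap.rotation (E := ℝ) θ)
      ((gaussianReal 0 1).prod (gaussianReal 0 1))
      ((gaussianReal 0 1).prod (gaussianReal 0 1)) :=
    ⟨by fun_prop, IsGaussian.map_rotation_eq_self (by simp) θ⟩
  have hneg : MeasurePreserving (fun x : ℝ => -x) (gaussianReal 0 1) (gaussianReal 0 1) :=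
    ⟨by fun_prop, by simpa using gaussianReal_map_neg (μ := 0) (v := 1)⟩
  convert! ((MeasurePreserving.id (gaussianReal 0 1)).prod hneg).comp hrot using 1
  ext p
  · simp [ContinuousLinearMap.rotation_apply, hc, hs]
  · simp [ContinuousLinearMap.rotation_apply, hc, hs]; ring

lemma one_add_abs_combination_le {c s : ℝ} (hc : |c| ≤ 1) (hs : |s| ≤ 1) (x y : ℝ) :
    1 + |c * x + s * y| ≤ (1 + |x|) * (1 + |y|) := by
  have h := abs_add_le (c * x) (s * y)
  rw [abs_mul, abs_mul] at h
  have hx := mul_le_mul_of_nonneg_right hc (abs_nonneg x)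
  have hy := mul_le_mul_of_nonneg_right hs (abs_nonneg y)
  nlinarith [mul_nonneg (abs_nonneg x) (abs_nonneg y)]

lemma abs_le_pow_of_growth {g : ℝ → ℝ} {K : ℝ} {n : ℕ} (hK : 0 ≤ K)
    (hg : ∀ x, |g x| ≤ K * (1 + |x|) ^ n) {c s : ℝ} (hc : |c| ≤ 1) (hs : |s| ≤ 1) (x y : ℝ) :
    |g (c * x + s * y)| ≤ K * ((1 + |x|) * (1 + |y|)) ^ n :=
  (hg _).trans (by gcongr; exact one_add_abs_combination_le hc hs x y)

lemma abs_fst_le_pow_of_growth {g : ℝ → ℝ} {K : ℝ} {n : ℕ} (hK : 0 ≤ K)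
    (hg : ∀ x, |g x| ≤ K * (1 + |x|) ^ n) (x y : ℝ) :
    |g x| ≤ K * ((1 + |x|) * (1 + |y|)) ^ n := by
  simpa using abs_le_pow_of_growth hK hg (c := 1) (s := 0) (by simp) (by simp) x y

lemma abs_sqrt_one_sub_sq_le_one (c : ℝ) : |Real.sqrt (1 - c ^ 2)| ≤ 1 := by
  rw [abs_of_nonneg (Real.sqrt_nonneg _)]
  exact Real.sqrt_le_one.2 (by nlinarith [sq_nonneg c])

/-- Two functions of polynomial growth evaluated at jointly Gaussian variables have an integrable
product. -/
lemma integrable_mul_comp_combination {g h : ℝ → ℝ} (hg : Continuous g) (hh : Continuous h)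
    {K : ℝ} {n : ℕ} (hK : 0 ≤ K) (hgK : ∀ x, |g x| ≤ K * (1 + |x|) ^ n)
    (hhK : ∀ x, |h x| ≤ K * (1 + |x|) ^ n) {c s : ℝ} (hc : |c| ≤ 1) (hs : |s| ≤ 1) :
    Integrable (fun p : ℝ × ℝ => g p.1 * h (c * p.1 + s * p.2))
      ((gaussianReal 0 1).prod (gaussianReal 0 1)) := by
  refine integrable_gaussianReal_prod_of_le_pow (K := K * K) (n := n + n) (by fun_prop)
    fun p => ?_
  rw [abs_mul, pow_add, mul_mul_mul_comm]
  exact mul_le_mul (abs_fst_le_pow_of_growth hK hgK _ _) (abs_le_pow_of_growth hK hhK hc hs _ _)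
    (abs_nonneg _) (by positivity)

/-- Differentiation under the integral sign for the Gaussian correlation of `f`. -/
lemma hasDerivAt_integral_gaussianReal_prod_combination {f f' : ℝ → ℝ}
    (hf : ∀ x, HasDerivAt f (f' x) x) (hf'c : Continuous f') {K : ℝ} {n : ℕ} (hK : 0 ≤ K)
    (hfK : ∀ x, |f x| ≤ K * (1 + |x|) ^ n) (hf'K : ∀ x, |f' x| ≤ K * (1 + |x|) ^ n)
    {c : ℝ} (hc : c ∈ Set.Ioo (-1 : ℝ) 1) :
    HasDerivAt
      (fun c : ℝ => ∫ p : ℝ × ℝ, f p.1 * f (c * p.1 + Real.sqrt (1 - c ^ 2) * p.2)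
        ∂((gaussianReal 0 1).prod (gaussianReal 0 1)))
      (∫ p : ℝ × ℝ, f p.1 * (f' (c * p.1 + Real.sqrt (1 - c ^ 2) * p.2) *
          (p.1 - c / Real.sqrt (1 - c ^ 2) * p.2))
        ∂((gaussianReal 0 1).prod (gaussianReal 0 1))) c := by
  have hfc : Continuous f := continuous_iff_continuousAt.2 fun x => (hf x).continuousAt
  obtain ⟨r, hcr, hr1⟩ := exists_between (abs_lt.2 hc)
  have hr0 : 0 ≤ r := (abs_nonneg c).trans hcr.le
  have hr : 0 < Real.sqrt (1 - r ^ 2) := Real.sqrt_pos.2 (by nlinarith)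
  set M := (Real.sqrt (1 - r ^ 2))⁻¹
  have hM : 0 < M := inv_pos.2 hr
  have hpos : ∀ x ∈ Set.Ioo (-r) r, 0 < 1 - x ^ 2 := fun x hx => by nlinarith [hx.1, hx.2]
  have habs : ∀ x ∈ Set.Ioo (-r) r, |x| ≤ 1 := fun x hx => ((abs_lt.2 hx).trans hr1).le
  have hratio : ∀ x ∈ Set.Ioo (-r) r, |x / Real.sqrt (1 - x ^ 2)| ≤ M := by
    intro x hx
    rw [abs_div, abs_of_nonneg (Real.sqrt_nonneg _), div_eq_mul_inv]
    have : (Real.sqrt (1 - x ^ 2))⁻¹ ≤ M := by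
      refine inv_anti₀ hr (Real.sqrt_le_sqrt ?_)
      nlinarith [hx.1, hx.2]
    have h0 : 0 ≤ (Real.sqrt (1 - x ^ 2))⁻¹ := by positivity
    nlinarith [habs x hx]
  refine (hasDerivAt_integral_of_dominated_loc_of_deriv_le
    (F := fun (x : ℝ) (p : ℝ × ℝ) => f p.1 * f (x * p.1 + Real.sqrt (1 - x ^ 2) * p.2))
    (F' := fun (x : ℝ) (p : ℝ × ℝ) => f p.1 * (f' (x * p.1 + Real.sqrt (1 - x ^ 2) * p.2) *
          (p.1 - x / Real.sqrt (1 - x ^ 2) * p.2)))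
    (bound := fun p => K * K * (1 + M) * ((1 + |p.1|) * (1 + |p.2|)) ^ (n + n + 1))
    (Ioo_mem_nhds (abs_lt.1 hcr).1 (abs_lt.1 hcr).2)
    (Eventually.of_forall fun x => Continuous.aestronglyMeasurable (by fun_prop))
    (integrable_mul_comp_combination hfc hfc hK hfK hfK (abs_lt.2 hc).le
      (abs_sqrt_one_sub_sq_le_one c))
    (Continuous.aestronglyMeasurable (by fun_prop))
    (ae_of_all _ fun p x hx => ?_)
    ((integrable_one_add_abs_mul_pow_gaussianReal_prod _).const_mul _)
    (ae_of_all _ fun p x hx => ?_)).2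
  · have hlin : |p.1 - x / Real.sqrt (1 - x ^ 2) * p.2| ≤
        (1 + M) * ((1 + |p.1|) * (1 + |p.2|)) := by
      have h := abs_sub p.1 (x / Real.sqrt (1 - x ^ 2) * p.2)
      rw [abs_mul] at h
      have h1 := mul_le_mul_of_nonneg_right (hratio x hx) (abs_nonneg p.2)
      have h2 := mul_nonneg (abs_nonneg p.1) (abs_nonneg p.2)
      have h3 := mul_nonneg hM.le (abs_nonneg p.1)
      have h4 := mul_nonneg hM.le h2
      have h5 := abs_nonneg p.2
      nlinarith
    have h1 := abs_fst_le_pow_of_growth hK hfK p.1 p.2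
    have h2 := abs_le_pow_of_growth hK hf'K (habs x hx) (abs_sqrt_one_sub_sq_le_one x) p.1 p.2
    rw [Real.norm_eq_abs, abs_mul, abs_mul]
    calc _ ≤ (K * ((1 + |p.1|) * (1 + |p.2|)) ^ n) * ((K * ((1 + |p.1|) * (1 + |p.2|)) ^ n) *
          ((1 + M) * ((1 + |p.1|) * (1 + |p.2|)))) := by gcongr
      _ = _ := by ring
  · have hs : HasDerivAt (fun x : ℝ => Real.sqrt (1 - x ^ 2)) (-(x / Real.sqrt (1 - x ^ 2))) x := by
      convert! (((hasDerivAt_id x).pow 2).const_sub 1).sqrt (hpos x hx).ne' using 1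
      have := (Real.sqrt_pos.2 (hpos x hx)).ne'
      simp only [Pi.pow_apply, id, Nat.cast_ofNat, Nat.reduceSub, pow_one]
      field_simp
    have hu := ((hasDerivAt_id x).mul_const p.1).add (hs.mul_const p.2)
    convert! ((hf _).comp x hu).const_mul (f p.1) using 2
    simp only [Pi.add_apply, id]
    ring

/-- Reflecting the plane and integrating by parts moves one derivative onto each factor. -/
lemma integral_mul_deriv_combination_eq {f f' : ℝ → ℝ}
    (hf : ∀ x, HasDerivAt f (f' x) x) (hf'c : Continuous f') {K : ℝ} {n : ℕ} (hK : 0 ≤ K)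
    (hfK : ∀ x, |f x| ≤ K * (1 + |x|) ^ n) (hf'K : ∀ x, |f' x| ≤ K * (1 + |x|) ^ n)
    {c s : ℝ} (hcs : c ^ 2 + s ^ 2 = 1) (hs : s ≠ 0) :
    ∫ p : ℝ × ℝ, f p.1 * (f' (c * p.1 + s * p.2) * (p.1 - c / s * p.2))
        ∂((gaussianReal 0 1).prod (gaussianReal 0 1)) =
      ∫ x, ∫ y, f' x * f' (c * x + s * y) ∂(gaussianReal 0 1) ∂(gaussianReal 0 1) := by
  have hfc : Continuous f := continuous_iff_continuousAt.2 fun x => (hf x).continuousAt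
  have hc1 : |c| ≤ 1 := (sq_le_one_iff_abs_le_one c).1 (by nlinarith [sq_nonneg s])
  have hs1 : |s| ≤ 1 := (sq_le_one_iff_abs_le_one s).1 (by nlinarith [sq_nonneg c])
  have hT := measurePreserving_reflection_gaussianReal_prod hcs
  have hbound : ∀ x y, |y * f (c * x + s * y)| ≤ K * ((1 + |x|) * (1 + |y|)) ^ (n + 1) := by
    intro x y
    have hy : |y| ≤ (1 + |x|) * (1 + |y|) := by
      nlinarith [abs_nonneg x, mul_nonneg (abs_nonneg x) (abs_nonneg y)]
    rw [abs_mul]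
    calc _ ≤ ((1 + |x|) * (1 + |y|)) * (K * ((1 + |x|) * (1 + |y|)) ^ n) :=
          mul_le_mul hy (abs_le_pow_of_growth hK hfK hc1 hs1 x y) (abs_nonneg _) (by positivity)
      _ = _ := by ring
  rw [← hT.map_eq, integral_map hT.aemeasurable (Continuous.aestronglyMeasurable (by fun_prop))]
  have hcomb : ∀ p : ℝ × ℝ, f (c * p.1 + s * p.2) *
      (f' (c * (c * p.1 + s * p.2) + s * (s * p.1 - c * p.2)) *
        ((c * p.1 + s * p.2) - c / s * (s * p.1 - c * p.2))) =
      s⁻¹ * (f' p.1 * (p.2 * f (c * p.1 + s * p.2))) := by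
    intro p
    have h1 : c * (c * p.1 + s * p.2) + s * (s * p.1 - c * p.2) = p.1 := by
      linear_combination p.1 * hcs
    have h2 : (c * p.1 + s * p.2) - c / s * (s * p.1 - c * p.2) = s⁻¹ * p.2 := by
      field_simp
      linear_combination p.2 * hcs
    rw [h1, h2]
    ring
  simp only [hcomb]
  rw [integral_const_mul, integral_prod]
  · rw [← integral_const_mul]
    congr 1
    ext x
    have hgrowth : ∀ {g : ℝ → ℝ} {m : ℕ}, (∀ y, |g y| ≤ K * ((1 + |x|) * (1 + |y|)) ^ m) →
        ∀ y, |g y| ≤ K * (1 + |x|) ^ m * (1 + |y|) ^ m := fun h y => by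
      simpa only [mul_pow, mul_assoc] using h y
    have hstein := integral_id_mul_gaussianReal_eq_integral_deriv
      (g := fun y => f (c * x + s * y)) (g' := fun y => s * f' (c * x + s * y))
      (fun y => by
        convert! (hf (c * x + s * y)).comp y (((hasDerivAt_id y).const_mul s).const_add (c * x))
          using 1
        simp [mul_comm])
      (integrable_gaussianReal_of_le_pow (by fun_prop)
        (hgrowth (abs_le_pow_of_growth hK hfK hc1 hs1 x)))
      ((integrable_gaussianReal_of_le_pow (by fun_prop)
        (hgrowth (abs_le_pow_of_growth hK hf'K hc1 hs1 x))).const_mul s)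
      (integrable_gaussianReal_of_le_pow (by fun_prop) (hgrowth (hbound x)))
    simp only [integral_const_mul] at hstein ⊢
    rw [hstein]
    field_simp
  · refine integrable_gaussianReal_prod_of_le_pow (K := K * K) (n := n + (n + 1)) (by fun_prop)
      fun p => ?_
    rw [abs_mul, pow_add, mul_mul_mul_comm]
    exact mul_le_mul (abs_fst_le_pow_of_growth hK hf'K _ _) (hbound _ _) (abs_nonneg _)
      (by positivity)

/-- The derivative of the Gaussian correlation of `f` is the Gaussian correlation of `f'`. -/
lemma hasDerivAt_gaussian_correlation {f f' : ℝ → ℝ}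
    (hf : ∀ x, HasDerivAt f (f' x) x) (hf'c : Continuous f') {K : ℝ} {n : ℕ} (hK : 0 ≤ K)
    (hfK : ∀ x, |f x| ≤ K * (1 + |x|) ^ n) (hf'K : ∀ x, |f' x| ≤ K * (1 + |x|) ^ n)
    {c : ℝ} (hc : c ∈ Set.Ioo (-1 : ℝ) 1) :
    HasDerivAt
      (fun c : ℝ => ∫ x, ∫ y, f x * f (c * x + Real.sqrt (1 - c ^ 2) * y)
        ∂(gaussianReal 0 1) ∂(gaussianReal 0 1))
      (∫ x, ∫ y, f' x * f' (c * x + Real.sqrt (1 - c ^ 2) * y)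
        ∂(gaussianReal 0 1) ∂(gaussianReal 0 1)) c := by
  have hfc : Continuous f := continuous_iff_continuousAt.2 fun x => (hf x).continuousAt
  have hpos : 0 < 1 - c ^ 2 := by nlinarith [hc.1, hc.2]
  have h := hasDerivAt_integral_gaussianReal_prod_combination hf hf'c hK hfK hf'K hc
  rw [integral_mul_deriv_combination_eq hf hf'c hK hfK hf'K
    (by rw [Real.sq_sqrt hpos.le]; ring) (Real.sqrt_pos.2 hpos).ne'] at h
  refine h.congr_of_eventuallyEq ?_
  filter_upwards [Ioo_mem_nhds hc.1 hc.2] with x hx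
  exact (integral_prod _ (integrable_mul_comp_combination hfc hfc hK hfK hfK (abs_lt.2 hx).le
    (abs_sqrt_one_sub_sq_le_one x))).symm

/-- Polynomial growth is preserved by rescaling the argument and enlarging the constants. -/
lemma abs_comp_mul_le_of_growth {g : ℝ → ℝ} {K : ℝ} {k : ℕ}
    (hg : ∀ x, |g x| ≤ K * (1 + |x|) ^ k) {a L : ℝ} (ha : 0 ≤ a) (hKL : |K| ≤ L) {n : ℕ}
    (hkn : k ≤ n) (x : ℝ) : |g (a * x)| ≤ L * (1 + a) ^ n * (1 + |x|) ^ n := by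
  have hL : 0 ≤ L := (abs_nonneg K).trans hKL
  have h1 : 1 + |a * x| ≤ (1 + a) * (1 + |x|) := by
    rw [abs_mul, abs_of_nonneg ha]
    nlinarith [abs_nonneg x]
  have h2 : (1 : ℝ) ≤ 1 + |a * x| := by linarith [abs_nonneg (a * x)]
  calc |g (a * x)| ≤ K * (1 + |a * x|) ^ k := hg _
    _ ≤ L * (1 + |a * x|) ^ n := by
        gcongr
        exact (le_abs_self K).trans hKL
    _ ≤ L * ((1 + a) * (1 + |x|)) ^ n := by gcongr
    _ = _ := by rw [mul_pow, mul_assoc]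

/-- for φ C¹ with φ, φ′ of polynomial growth, the correlation map
C(c) = (γ/q*)(σα² ∫∫ φ(√q* z₁) φ(√q*(c z₁ + √(1−c²) z₂)) Dz₁ Dz₂ + σb²)
is differentiable on (−1,1) with
C′(c) = γ σα² ∫∫ φ′(√q* z₁) φ′(√q*(c z₁ + √(1−c²) z₂)) Dz₁ Dz₂. -/
theorem correlation_map_deriv
    (γ σα σb qs : ℝ) (hγ : γ ∈ Set.Ioc (0 : ℝ) 1) (hσα : 0 ≤ σα) (hσb : 0 ≤ σb)
    (hqs : 0 < qs)
    (φ : ℝ → ℝ) (hφ : ContDiff ℝ 1 φ)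
    (hφgrowth : ∃ (K : ℝ) (k : ℕ), ∀ x : ℝ, |φ x| ≤ K * (1 + |x|) ^ k)
    (hφ'growth : ∃ (K : ℝ) (k : ℕ), ∀ x : ℝ, |deriv φ x| ≤ K * (1 + |x|) ^ k) :
    ∀ c ∈ Set.Ioo (-1 : ℝ) 1,
      HasDerivAt
        (fun c : ℝ => (γ / qs) * (σα ^ 2 *
          ∫ z₁, ∫ z₂, φ (Real.sqrt qs * z₁) *
            φ (Real.sqrt qs * (c * z₁ + Real.sqrt (1 - c ^ 2) * z₂))
            ∂(gaussianReal 0 1) ∂(gaussianReal 0 1) + σb ^ 2))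
        (γ * σα ^ 2 *
          ∫ z₁, ∫ z₂, deriv φ (Real.sqrt qs * z₁) *
            deriv φ (Real.sqrt qs * (c * z₁ + Real.sqrt (1 - c ^ 2) * z₂))
            ∂(gaussianReal 0 1) ∂(gaussianReal 0 1))
        c := by
  intro c hc
  obtain ⟨K₀, k₀, h₀⟩ := hφgrowth
  obtain ⟨K₁, k₁, h₁⟩ := hφ'growth
  set a := Real.sqrt qs
  have ha0 : 0 ≤ a := Real.sqrt_nonneg _
  have haa : a * a = qs := Real.mul_self_sqrt hqs.le
  have hφd : ∀ x, HasDerivAt φ (deriv φ x) x := fun x =>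
    (hφ.differentiable one_ne_zero x).hasDerivAt
  have hφ'c : Continuous (deriv φ) := hφ.continuous_deriv le_rfl
  set L := |K₀| + |K₁|
  set n := k₀ + k₁
  have hL0 : 0 ≤ L := by positivity
  have hφK := abs_comp_mul_le_of_growth h₀ ha0 (L := L) (n := n)
    (by linarith [abs_nonneg K₁]) (by omega)
  have hφ'K := abs_comp_mul_le_of_growth h₁ ha0 (L := L) (n := n)
    (by linarith [abs_nonneg K₀]) (by omega)
  have h := hasDerivAt_gaussian_correlation (f := fun x => φ (a * x))
    (f' := fun x => a * deriv φ (a * x)) (K := (1 + a) * (L * (1 + a) ^ n)) (n := n)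
    (fun x => by
      convert! (hφd (a * x)).comp x ((hasDerivAt_id x).const_mul a) using 1
      simp [mul_comm])
    (by fun_prop) (by positivity)
    (fun x => (hφK x).trans (by
      rw [mul_assoc (1 + a)]
      exact le_mul_of_one_le_left (by positivity) (by linarith)))
    (fun x => by
      rw [abs_mul, abs_of_nonneg ha0, mul_assoc (1 + a)]
      exact mul_le_mul (by linarith) (hφ'K x) (abs_nonneg _) (by positivity))
    hc
  convert! ((h.const_mul (σα ^ 2)).add_const (σb ^ 2)).const_mul (γ / qs) using 1
  simp only [mul_mul_mul_comm a, haa, integral_const_mul]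
  field_simp
  simp only [mul_comm c]
end

section
/- Let γ ∈ (0,1], σ_α ≥ 0, σ_b ≥ 0, and let φ : ℝ → ℝ be twice continuously differentiable with φ, φ′, φ″ of at most polynomial growth. Suppose q* > 0 satisfies q* = γ(σ_α² ∫ φ(√q* z)² Dz + σ_b²). Then there exist constants K ≥ 0 and ε₀ > 0 such that for all ε ∈ (0, ε₀): |C(1 − ε) − (1 − χ_γ ε)| ≤ K ε^{3/2}; that is, C(1 − ε) = 1 − χ_γ ε + O(ε^{3/2}) as ε → 0⁺. -/
open MeasureTheory ProbabilityTheory Filter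
open scoped NNReal ENNReal

/-- First-order Taylor estimate on a symmetric interval `[-R, R]` on which `|f''| ≤ L`. -/
lemma abs_taylor_one_sub_le {f f' f'' : ℝ → ℝ} (hf : ∀ t, HasDerivAt f (f' t) t)
    (hf' : ∀ t, HasDerivAt f' (f'' t) t) {R L : ℝ} (hL : ∀ t, |t| ≤ R → |f'' t| ≤ L)
    {x y : ℝ} (hx : |x| ≤ R) (hy : |y| ≤ R) :
    |f y - f x - f' x * (y - x)| ≤ L * |y - x| ^ 2 := by
  have hL0 : 0 ≤ L := (abs_nonneg _).trans (hL x hx)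
  have hR : ∀ t ∈ Set.uIcc x y, |t| ≤ R := by
    intro t ht
    have h : Set.uIcc x y ⊆ Set.Icc (-R) R :=
      Set.uIcc_subset_Icc (abs_le.mp hx) (abs_le.mp hy)
    exact abs_le.mpr (h ht)
  have hlip : ∀ t ∈ Set.uIcc x y, |f' t - f' x| ≤ L * |y - x| := by
    intro t ht
    have h := (convex_uIcc x y).norm_image_sub_le_of_norm_hasDerivWithin_le
      (fun s _ ↦ (hf' s).hasDerivWithinAt) (fun s hs ↦ hL s (hR s hs)) Set.left_mem_uIcc ht
    exact h.trans (mul_le_mul_of_nonneg_left (Set.abs_sub_left_of_mem_uIcc ht) hL0)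
  have h := (convex_uIcc x y).norm_image_sub_le_of_norm_hasDerivWithin_le
    (f := fun t ↦ f t - f' x * t) (f' := fun t ↦ f' t - f' x) (C := L * |y - x|)
    (fun t _ ↦ (((hf t).fun_sub ((hasDerivAt_id' t).const_mul (f' x))).congr_deriv
      (by ring)).hasDerivWithinAt)
    hlip Set.left_mem_uIcc Set.right_mem_uIcc
  simp only [Real.norm_eq_abs] at h
  calc |f y - f x - f' x * (y - x)| = |f y - f' x * y - (f x - f' x * x)| := by congr 1; ring
    _ ≤ L * |y - x| * |y - x| := h
    _ = L * |y - x| ^ 2 := by ring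

/-- If `y = (1 - ε) x + √(1 - (1 - ε)²) z`, then `(f y - f x)²` equals `2 ε f'(x)² z²` up to an
error of order `ε^{3/2}` with polynomially growing constant. -/
lemma abs_sq_increment_sub_le {f f' f'' : ℝ → ℝ} (hf : ∀ t, HasDerivAt f (f' t) t)
    (hf' : ∀ t, HasDerivAt f' (f'' t) t) {A : ℝ} {k : ℕ}
    (h1 : ∀ t, |f' t| ≤ A * (1 + |t|) ^ k) (h2 : ∀ t, |f'' t| ≤ A * (1 + |t|) ^ k)
    {r s : ℝ} (hr0 : 0 ≤ r) (hr1 : r ≤ 1) (hs0 : 0 ≤ s) (hs : s ^ 2 = 1 - (1 - r ^ 2) ^ 2)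
    (x z : ℝ) :
    |(f ((1 - r ^ 2) * x + s * z) - f x) ^ 2 - 2 * r ^ 2 * (f' x ^ 2 * z ^ 2)|
      ≤ 38 * A ^ 2 * r ^ 3 * (1 + |x| + |z|) ^ (2 * k + 4) := by
  have hA : 0 ≤ A := by simpa using (abs_nonneg _).trans (h1 0)
  have hr2 : r ^ 2 ≤ 1 := pow_le_one₀ hr0 hr1
  have hr43 : r ^ 4 ≤ r ^ 3 := pow_le_pow_of_le_one hr0 hr1 (by norm_num)
  have hr21 : r ^ 2 ≤ r := by nlinarith
  have hs1 : s ≤ 1 := by nlinarith [sq_nonneg (1 - r ^ 2)]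
  have hs2 : s ≤ 2 * r := by
    refine abs_le_of_sq_le_sq' ?_ (by positivity) |>.2
    nlinarith [sq_nonneg (r ^ 2), sq_nonneg r]
  have hx := abs_nonneg x
  have hz := abs_nonneg z
  set W := 1 + |x| + |z| with hW
  have hW1 : 1 ≤ W := by linarith
  set y := (1 - r ^ 2) * x + s * z with hy
  set P := A * W ^ k with hP
  have hP0 : 0 ≤ P := by positivity
  have hyW : |y| ≤ |x| + |z| := by
    calc |y| ≤ |(1 - r ^ 2) * x| + |s * z| := abs_add_le _ _
      _ = (1 - r ^ 2) * |x| + s * |z| := by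
        rw [abs_mul, abs_mul, abs_of_nonneg hs0, abs_of_nonneg (by linarith : 0 ≤ 1 - r ^ 2)]
      _ ≤ |x| + |z| := by nlinarith [sq_nonneg r]
  have hgrow : ∀ t, |t| ≤ |x| + |z| → A * (1 + |t|) ^ k ≤ P := by
    intro t ht
    have : 1 + |t| ≤ W := by linarith
    rw [hP]; gcongr
  have hxW : |x| ≤ |x| + |z| := by linarith
  have htaylor := abs_taylor_one_sub_le hf hf' (fun t ht ↦ (h2 t).trans (hgrow t ht)) hxW hyW
  have hf'x : |f' x| ≤ P := (h1 x).trans (hgrow x hxW)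
  have hd : |y - x| ≤ 2 * r * W := by
    calc |y - x| = |s * z - r ^ 2 * x| := by rw [hy]; congr 1; ring
      _ ≤ |s * z| + |r ^ 2 * x| := abs_sub _ _
      _ = s * |z| + r ^ 2 * |x| := by
        rw [abs_mul, abs_mul, abs_of_nonneg hs0, abs_of_nonneg (sq_nonneg r)]
      _ ≤ 2 * r * |z| + 2 * r * |x| := by gcongr; linarith
      _ ≤ 2 * r * W := by rw [hW]; nlinarith
  set d := |y - x| with hdd
  have hd0 : 0 ≤ d := abs_nonneg _
  have hd2 : d ≤ 2 * W := hd.trans (by nlinarith)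
  have hfirst : |(f y - f x) ^ 2 - (f' x * (y - x)) ^ 2| ≤ 32 * P ^ 2 * r ^ 3 * W ^ 4 := by
    have hlin : |f' x * (y - x)| ≤ P * d := by rw [abs_mul]; gcongr
    have hsum : |f y - f x + f' x * (y - x)| ≤ P * d ^ 2 + 2 * (P * d) := by
      calc |f y - f x + f' x * (y - x)|
          = |(f y - f x - f' x * (y - x)) + 2 * (f' x * (y - x))| := by congr 1; ring
        _ ≤ |f y - f x - f' x * (y - x)| + |2 * (f' x * (y - x))| := abs_add_le _ _
        _ ≤ P * d ^ 2 + 2 * (P * d) := by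
          rw [abs_mul 2, abs_two]; gcongr
    calc |(f y - f x) ^ 2 - (f' x * (y - x)) ^ 2|
        = |f y - f x - f' x * (y - x)| * |f y - f x + f' x * (y - x)| := by
          rw [← abs_mul]; congr 1; ring
      _ ≤ (P * d ^ 2) * (P * d ^ 2 + 2 * (P * d)) := by gcongr
      _ = P ^ 2 * d ^ 3 * (d + 2) := by ring
      _ ≤ P ^ 2 * (2 * r * W) ^ 3 * (4 * W) := by gcongr; linarith
      _ = 32 * P ^ 2 * r ^ 3 * W ^ 4 := by ring
  have hsecond : |(f' x * (y - x)) ^ 2 - 2 * r ^ 2 * (f' x ^ 2 * z ^ 2)|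
      ≤ 6 * P ^ 2 * r ^ 3 * W ^ 4 := by
    have hexp : (f' x * (y - x)) ^ 2 - 2 * r ^ 2 * (f' x ^ 2 * z ^ 2)
        = f' x ^ 2 * (r ^ 4 * x ^ 2 - r ^ 4 * z ^ 2 - 2 * (s * r ^ 2) * (x * z)) := by
      have : y - x = s * z - r ^ 2 * x := by rw [hy]; ring
      rw [this]; linear_combination f' x ^ 2 * z ^ 2 * hs
    have hxx : |x| ≤ W := by linarith
    have hzz : |z| ≤ W := by linarith
    have hsr : s * r ^ 2 ≤ 2 * r ^ 3 := by nlinarith [sq_nonneg r]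
    have hW24 : W ^ 2 ≤ W ^ 4 := pow_le_pow_right₀ hW1 (by norm_num)
    have hin : |r ^ 4 * x ^ 2 - r ^ 4 * z ^ 2 - 2 * (s * r ^ 2) * (x * z)|
        ≤ 6 * r ^ 3 * W ^ 4 := by
      calc |r ^ 4 * x ^ 2 - r ^ 4 * z ^ 2 - 2 * (s * r ^ 2) * (x * z)|
          ≤ |r ^ 4 * x ^ 2| + |r ^ 4 * z ^ 2| + |2 * (s * r ^ 2) * (x * z)| :=
            (abs_sub _ _).trans (by gcongr; exact abs_sub _ _)
        _ = r ^ 4 * |x| ^ 2 + r ^ 4 * |z| ^ 2 + 2 * (s * r ^ 2) * (|x| * |z|) := by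
            rw [abs_mul, abs_mul, abs_mul, abs_mul x z, abs_pow x, abs_pow z,
              abs_of_nonneg (by positivity : 0 ≤ r ^ 4),
              abs_of_nonneg (by positivity : 0 ≤ 2 * (s * r ^ 2))]
        _ ≤ r ^ 3 * W ^ 2 + r ^ 3 * W ^ 2 + 2 * (2 * r ^ 3) * (W * W) := by gcongr
        _ = 6 * r ^ 3 * W ^ 2 := by ring
        _ ≤ 6 * r ^ 3 * W ^ 4 := by gcongr
    rw [hexp, abs_mul, abs_pow]
    calc |f' x| ^ 2 * |r ^ 4 * x ^ 2 - r ^ 4 * z ^ 2 - 2 * (s * r ^ 2) * (x * z)|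
        ≤ P ^ 2 * (6 * r ^ 3 * W ^ 4) := by gcongr
      _ = 6 * P ^ 2 * r ^ 3 * W ^ 4 := by ring
  calc _ ≤ 32 * P ^ 2 * r ^ 3 * W ^ 4 + 6 * P ^ 2 * r ^ 3 * W ^ 4 :=
        (abs_sub_le _ ((f' x * (y - x)) ^ 2) _).trans (add_le_add hfirst hsecond)
    _ = 38 * A ^ 2 * r ^ 3 * W ^ (2 * k + 4) := by rw [hP]; ring

/-- All moments of `1 + |X| + |Z|` are finite for independent standard Gaussians `X`, `Z`. -/
lemma integrable_one_add_abs_add_abs_pow (m : ℕ) :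
    Integrable (fun p : ℝ × ℝ ↦ (1 + |p.1| + |p.2|) ^ m)
      ((gaussianReal 0 1).prod (gaussianReal 0 1)) := by
  have hid : MemLp (id : ℝ → ℝ) m (gaussianReal 0 1) :=
    memLp_id_gaussianReal' _ (ENNReal.natCast_ne_top m)
  have hfst : MemLp (fun p : ℝ × ℝ ↦ |p.1|) m ((gaussianReal 0 1).prod (gaussianReal 0 1)) :=
    (hid.comp_fst _).norm
  have hsnd : MemLp (fun p : ℝ × ℝ ↦ |p.2|) m ((gaussianReal 0 1).prod (gaussianReal 0 1)) :=
    (hid.comp_snd _).norm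
  have h := (((memLp_const (1 : ℝ)).add hfst).add hsnd).integrable_norm_pow'
  refine h.congr (ae_of_all _ fun p ↦ ?_)
  have hp : 0 ≤ 1 + |p.1| + |p.2| := by positivity
  simp only [Pi.add_apply, Real.norm_eq_abs, abs_of_nonneg hp]

lemma integrable_prod_gaussianReal_of_growth {h : ℝ × ℝ → ℝ} (hc : Continuous h) {A : ℝ} {m : ℕ}
    (hb : ∀ p, |h p| ≤ A * (1 + |p.1| + |p.2|) ^ m) :
    Integrable h ((gaussianReal 0 1).prod (gaussianReal 0 1)) :=
  ((integrable_one_add_abs_add_abs_pow m).const_mul A).mono' hc.aestronglyMeasurable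
    (ae_of_all _ hb)

/-- A unit-norm linear combination of independent standard Gaussians is standard Gaussian. -/
lemma map_linear_comb_prod_gaussianReal {c s : ℝ} (h : c ^ 2 + s ^ 2 = 1) :
    ((gaussianReal 0 1).prod (gaussianReal 0 1)).map (fun p : ℝ × ℝ ↦ c * p.1 + s * p.2)
      = gaussianReal 0 1 := by
  have hind : IndepFun (fun p : ℝ × ℝ ↦ c * p.1) (fun p : ℝ × ℝ ↦ s * p.2)
      ((gaussianReal 0 1).prod (gaussianReal 0 1)) :=
    indepFun_prod (X := (c * ·)) (Y := (s * ·)) (by fun_prop) (by fun_prop)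
  have hX : ((gaussianReal 0 1).prod (gaussianReal 0 1)).map (fun p : ℝ × ℝ ↦ c * p.1)
      = gaussianReal (c * 0) (.mk (c ^ 2) (sq_nonneg _) * 1) := by
    rw [← gaussianReal_map_const_mul]
    exact (Measure.map_map (g := (c * ·)) (by fun_prop) measurable_fst).symm.trans
      (by rw [measurePreserving_fst.map_eq])
  have hY : ((gaussianReal 0 1).prod (gaussianReal 0 1)).map (fun p : ℝ × ℝ ↦ s * p.2)
      = gaussianReal (s * 0) (.mk (s ^ 2) (sq_nonneg _) * 1) := by
    rw [← gaussianReal_map_const_mul]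
    exact (Measure.map_map (g := (s * ·)) (by fun_prop) measurable_snd).symm.trans
      (by rw [measurePreserving_snd.map_eq])
  refine (gaussianReal_add_gaussianReal_of_indepFun hind hX hY).trans ?_
  congr 1
  · ring
  · ext; simpa using h

lemma integral_sq_gaussianReal_zero_one : ∫ z, z ^ 2 ∂(gaussianReal 0 1) = 1 := by
  have h := variance_fun_id_gaussianReal (μ := 0) (v := 1)
  rw [variance_eq_integral measurable_id'.aemeasurable] at h
  simpa using h

/-- The covariance `E[f(X) f(Y)]` of `f` at standard Gaussians with correlation `1 - ε` equals
`E[f(X)²] - ε E[f'(X)²]` up to `O(ε^{3/2})`. -/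
lemma exists_abs_gaussian_covariance_sub_le {f f' f'' : ℝ → ℝ}
    (hf : ∀ t, HasDerivAt f (f' t) t) (hf' : ∀ t, HasDerivAt f' (f'' t) t) {A : ℝ} {k : ℕ}
    (h0 : ∀ t, |f t| ≤ A * (1 + |t|) ^ k) (h1 : ∀ t, |f' t| ≤ A * (1 + |t|) ^ k)
    (h2 : ∀ t, |f'' t| ≤ A * (1 + |t|) ^ k) :
    ∃ K : ℝ, 0 ≤ K ∧ ∀ ε ∈ Set.Ioo (0 : ℝ) 1,
      |∫ x, ∫ z, f x * f ((1 - ε) * x + Real.sqrt (1 - (1 - ε) ^ 2) * z)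
          ∂(gaussianReal 0 1) ∂(gaussianReal 0 1)
        - (∫ x, f x ^ 2 ∂(gaussianReal 0 1) - ε * ∫ x, f' x ^ 2 ∂(gaussianReal 0 1))|
        ≤ K * ε ^ ((3 : ℝ) / 2) := by
  set ν := (gaussianReal 0 1).prod (gaussianReal 0 1) with hν
  have hA : 0 ≤ A := by simpa using (abs_nonneg _).trans (h0 0)
  have hfc : Continuous f := continuous_iff_continuousAt.mpr fun t ↦ (hf t).continuousAt
  have hfc' : Continuous f' := continuous_iff_continuousAt.mpr fun t ↦ (hf' t).continuousAt
  have hG0 : 0 ≤ ∫ p : ℝ × ℝ, (1 + |p.1| + |p.2|) ^ (2 * k + 4) ∂ν :=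
    integral_nonneg fun p ↦ by positivity
  refine ⟨19 * A ^ 2 * ∫ p : ℝ × ℝ, (1 + |p.1| + |p.2|) ^ (2 * k + 4) ∂ν, by positivity, ?_⟩
  rintro ε ⟨hε0, hε1⟩
  set r := Real.sqrt ε with hr
  have hrε : r ^ 2 = ε := Real.sq_sqrt hε0.le
  have hr0 : 0 ≤ r := Real.sqrt_nonneg _
  have hr1 : r ≤ 1 := Real.sqrt_le_one.mpr hε1.le
  have hr3 : ε ^ ((3 : ℝ) / 2) = r ^ 3 := by
    rw [hr, Real.sqrt_eq_rpow, ← Real.rpow_natCast, ← Real.rpow_mul hε0.le]; norm_num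
  set s := Real.sqrt (1 - (1 - ε) ^ 2) with hs
  have hs0 : 0 ≤ s := Real.sqrt_nonneg _
  have hs2 : s ^ 2 = 1 - (1 - ε) ^ 2 := Real.sq_sqrt (by nlinarith)
  have hs1 : s ≤ 1 := by nlinarith [sq_nonneg (1 - ε)]
  have hpt := fun x z ↦ abs_sq_increment_sub_le hf hf' h1 h2 hr0 hr1 hs0 (by rw [hrε, hs2]) x z
  rw [hr3]
  simp only [hrε] at hpt
  have hgx : ∀ (g : ℝ → ℝ), (∀ t, |g t| ≤ A * (1 + |t|) ^ k) → ∀ p : ℝ × ℝ,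
      |g p.1| ≤ A * (1 + |p.1| + |p.2|) ^ k := fun g hg p ↦
    (hg _).trans (by gcongr 2; linarith [abs_nonneg p.2])
  have hgy : ∀ p : ℝ × ℝ, |f ((1 - ε) * p.1 + s * p.2)| ≤ A * (1 + |p.1| + |p.2|) ^ k := by
    intro p
    refine (h0 _).trans ?_
    have : |(1 - ε) * p.1 + s * p.2| ≤ |p.1| + |p.2| := by
      refine (abs_add_le _ _).trans ?_
      rw [abs_mul, abs_mul, abs_of_nonneg hs0, abs_of_nonneg (by linarith : 0 ≤ 1 - ε)]
      nlinarith [abs_nonneg p.1, abs_nonneg p.2]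
    gcongr 2
    linarith
  have hprod : ∀ a b c : ℝ, |a| ≤ A * c ^ k → |b| ≤ A * c ^ k →
      |a * b| ≤ A ^ 2 * c ^ (2 * k) := by
    intro a b c ha hb
    rw [abs_mul]
    calc |a| * |b| ≤ (A * c ^ k) * (A * c ^ k) :=
          mul_le_mul ha hb (abs_nonneg _) ((abs_nonneg _).trans ha)
      _ = A ^ 2 * c ^ (2 * k) := by ring
  have hIxx : Integrable (fun p : ℝ × ℝ ↦ f p.1 * f p.1) ν :=
    integrable_prod_gaussianReal_of_growth (by fun_prop)
      fun p ↦ hprod _ _ _ (hgx f h0 p) (hgx f h0 p)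
  have hIyy : Integrable (fun p : ℝ × ℝ ↦
      f ((1 - ε) * p.1 + s * p.2) * f ((1 - ε) * p.1 + s * p.2)) ν :=
    integrable_prod_gaussianReal_of_growth (by fun_prop) fun p ↦ hprod _ _ _ (hgy p) (hgy p)
  have hIxy : Integrable (fun p : ℝ × ℝ ↦ f p.1 * f ((1 - ε) * p.1 + s * p.2)) ν :=
    integrable_prod_gaussianReal_of_growth (by fun_prop) fun p ↦ hprod _ _ _ (hgx f h0 p) (hgy p)
  have hId : Integrable (fun p : ℝ × ℝ ↦ f' p.1 ^ 2 * p.2 ^ 2) ν := by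
    refine integrable_prod_gaussianReal_of_growth (A := A ^ 2) (m := 2 * k + 2)
      (by fun_prop) fun p ↦ ?_
    rw [abs_mul, pow_add, ← mul_assoc, abs_pow p.2, sq (f' p.1)]
    gcongr
    · exact hprod _ _ _ (hgx f' h1 p) (hgx f' h1 p)
    · linarith [abs_nonneg p.1]
  have hExx : ∫ p : ℝ × ℝ, f p.1 * f p.1 ∂ν = ∫ x, f x ^ 2 ∂(gaussianReal 0 1) := by
    simp_rw [← sq]
    simpa using integral_fun_fst (μ := gaussianReal 0 1) (ν := gaussianReal 0 1)
      (fun x ↦ f x ^ 2)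
  have hEyy : ∫ p : ℝ × ℝ, f ((1 - ε) * p.1 + s * p.2) * f ((1 - ε) * p.1 + s * p.2) ∂ν
      = ∫ x, f x ^ 2 ∂(gaussianReal 0 1) := by
    simp_rw [← sq]
    conv_rhs => rw [← map_linear_comb_prod_gaussianReal (c := 1 - ε) (s := s) (by rw [hs2]; ring)]
    rw [integral_map (by fun_prop) (by fun_prop)]
  have hExy : ∫ p : ℝ × ℝ, f p.1 * f ((1 - ε) * p.1 + s * p.2) ∂ν
      = ∫ x, ∫ z, f x * f ((1 - ε) * x + s * z) ∂(gaussianReal 0 1) ∂(gaussianReal 0 1) :=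
    integral_prod _ hIxy
  have hEd : ∫ p : ℝ × ℝ, f' p.1 ^ 2 * p.2 ^ 2 ∂ν = ∫ x, f' x ^ 2 ∂(gaussianReal 0 1) := by
    rw [hν, integral_prod_mul (fun x ↦ f' x ^ 2) (fun z ↦ z ^ 2),
      integral_sq_gaussianReal_zero_one, mul_one]
  have hint : ∫ p : ℝ × ℝ, ((f ((1 - ε) * p.1 + s * p.2) - f p.1) ^ 2
        - 2 * ε * (f' p.1 ^ 2 * p.2 ^ 2)) ∂ν
      = 2 * ∫ x, f x ^ 2 ∂(gaussianReal 0 1)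
        - 2 * ∫ x, ∫ z, f x * f ((1 - ε) * x + s * z) ∂(gaussianReal 0 1) ∂(gaussianReal 0 1)
        - 2 * ε * ∫ x, f' x ^ 2 ∂(gaussianReal 0 1) := by
    rw [← hExy, ← hEd]
    have : ∀ p : ℝ × ℝ, (f ((1 - ε) * p.1 + s * p.2) - f p.1) ^ 2
          - 2 * ε * (f' p.1 ^ 2 * p.2 ^ 2)
        = f ((1 - ε) * p.1 + s * p.2) * f ((1 - ε) * p.1 + s * p.2) + f p.1 * f p.1
          - 2 * (f p.1 * f ((1 - ε) * p.1 + s * p.2)) - 2 * ε * (f' p.1 ^ 2 * p.2 ^ 2) :=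
      fun p ↦ by ring
    simp_rw [this]
    rw [integral_sub (by fun_prop) (hId.const_mul (2 * ε)),
      integral_sub (hIyy.fun_add hIxx) (hIxy.const_mul 2), integral_add hIyy hIxx,
      integral_const_mul, integral_const_mul, hExx, hEyy]
    ring
  have hbound := norm_integral_le_of_norm_le
    (f := fun p : ℝ × ℝ ↦ (f ((1 - ε) * p.1 + s * p.2) - f p.1) ^ 2
      - 2 * ε * (f' p.1 ^ 2 * p.2 ^ 2))
    ((integrable_one_add_abs_add_abs_pow (2 * k + 4)).const_mul (38 * A ^ 2 * r ^ 3))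
    (ae_of_all _ fun p : ℝ × ℝ ↦ hpt p.1 p.2)
  rw [hint, integral_const_mul, Real.norm_eq_abs] at hbound
  rw [abs_le] at hbound ⊢
  constructor <;> linarith [hbound.1, hbound.2]

/-- Rescaling the argument preserves polynomial growth, with any larger constant and degree. -/
lemma abs_comp_const_mul_le_of_growth {g : ℝ → ℝ} {K : ℝ} {k : ℕ}
    (hg : ∀ x, |g x| ≤ K * (1 + |x|) ^ k) {a B : ℝ} {m : ℕ} (ha : 0 ≤ a) (hB : K ≤ B)
    (hm : k ≤ m) (x : ℝ) : |g (a * x)| ≤ B * (1 + a) ^ m * (1 + |x|) ^ m := by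
  have hK : 0 ≤ K := by simpa using (abs_nonneg _).trans (hg 0)
  have hx := abs_nonneg x
  rw [mul_assoc, ← mul_pow]
  calc |g (a * x)| ≤ K * (1 + |a * x|) ^ k := hg _
    _ ≤ B * ((1 + a) * (1 + |x|)) ^ k := by
      rw [abs_mul, abs_of_nonneg ha]
      gcongr
      · exact hK.trans hB
      · nlinarith
    _ ≤ B * ((1 + a) * (1 + |x|)) ^ m := by
      have : 0 ≤ B := hK.trans hB
      gcongr
      nlinarith

/-- at the fixed point q* of the length map, the correlation map satisfies
C(1 − ε) = 1 − χ_γ ε + O(ε^{3/2}) as ε → 0⁺, where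
C(c) = (γ/q*)(σα² ∫∫ φ(√q* z₁) φ(√q*(c z₁ + √(1−c²) z₂)) Dz₁ Dz₂ + σb²) and
χ_γ = γ σα² ∫ (φ′(√q* z))² Dz. -/
theorem correlation_map_expansion_at_one
    (γ σα σb qs : ℝ) (hγ : γ ∈ Set.Ioc (0 : ℝ) 1) (hσα : 0 ≤ σα) (hσb : 0 ≤ σb)
    (hqs : 0 < qs)
    (φ : ℝ → ℝ) (hφ : ContDiff ℝ 2 φ)
    (hφgrowth : ∃ (K : ℝ) (k : ℕ), ∀ x : ℝ, |φ x| ≤ K * (1 + |x|) ^ k)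
    (hφ'growth : ∃ (K : ℝ) (k : ℕ), ∀ x : ℝ, |deriv φ x| ≤ K * (1 + |x|) ^ k)
    (hφ''growth : ∃ (K : ℝ) (k : ℕ), ∀ x : ℝ, |deriv (deriv φ) x| ≤ K * (1 + |x|) ^ k)
    (hfix : qs = γ * (σα ^ 2 * ∫ z, (φ (Real.sqrt qs * z)) ^ 2 ∂(gaussianReal 0 1) + σb ^ 2)) :
    ∃ (K : ℝ) (ε₀ : ℝ), 0 ≤ K ∧ 0 < ε₀ ∧ ∀ ε ∈ Set.Ioo (0 : ℝ) ε₀,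
      |(γ / qs) * (σα ^ 2 *
          ∫ z₁, ∫ z₂, φ (Real.sqrt qs * z₁) *
            φ (Real.sqrt qs * ((1 - ε) * z₁ + Real.sqrt (1 - (1 - ε) ^ 2) * z₂))
            ∂(gaussianReal 0 1) ∂(gaussianReal 0 1) + σb ^ 2) -
        (1 - (γ * σα ^ 2 * ∫ z, (deriv φ (Real.sqrt qs * z)) ^ 2 ∂(gaussianReal 0 1)) * ε)|
        ≤ K * ε ^ ((3 : ℝ) / 2) := by
  obtain ⟨K₀, k₀, hK₀⟩ := hφgrowth
  obtain ⟨K₁, k₁, hK₁⟩ := hφ'growth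
  obtain ⟨K₂, k₂, hK₂⟩ := hφ''growth
  have hderiv : ∀ t, HasDerivAt φ (deriv φ t) t := fun t ↦
    (hφ.differentiable (by norm_num) t).hasDerivAt
  have hφ1 : ContDiff ℝ 1 (deriv φ) := ((contDiff_succ_iff_deriv (n := 1)).mp hφ).2.2
  have hderiv2 : ∀ t, HasDerivAt (deriv φ) (deriv (deriv φ) t) t := fun t ↦
    (hφ1.differentiable (by norm_num) t).hasDerivAt
  set a := Real.sqrt qs with ha
  have ha0 : 0 ≤ a := Real.sqrt_nonneg _
  have ha2 : a ^ 2 = qs := Real.sq_sqrt hqs.le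
  have hscale : ∀ t, HasDerivAt (fun t ↦ a * t) a t := fun t ↦ by
    simpa using (hasDerivAt_id t).const_mul a
  have hd1 : ∀ t, HasDerivAt (fun t ↦ φ (a * t)) (a * deriv φ (a * t)) t := fun t ↦
    ((hderiv (a * t)).comp t (hscale t)).congr_deriv (by ring)
  have hd2 : ∀ t, HasDerivAt (fun t ↦ a * deriv φ (a * t)) (a ^ 2 * deriv (deriv φ) (a * t)) t :=
    fun t ↦ (((hderiv2 (a * t)).comp t (hscale t)).const_mul a).congr_deriv (by ring)
  have hnn : ∀ {g : ℝ → ℝ} {K : ℝ} {k : ℕ}, (∀ x, |g x| ≤ K * (1 + |x|) ^ k) → 0 ≤ K :=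
    fun h ↦ by simpa using (abs_nonneg _).trans (h 0)
  have hn0 := hnn hK₀
  have hn1 := hnn hK₁
  have hn2 := hnn hK₂
  set m := k₀ + k₁ + k₂ with hm
  set B := (K₀ + K₁ + K₂) * (1 + a) ^ m with hB
  have hB0 : 0 ≤ B := by positivity
  have hg0 : ∀ t, |φ (a * t)| ≤ B * (1 + |t|) ^ m :=
    abs_comp_const_mul_le_of_growth hK₀ ha0 (by linarith) (by omega)
  have hg1 : ∀ t, |deriv φ (a * t)| ≤ B * (1 + |t|) ^ m :=
    abs_comp_const_mul_le_of_growth hK₁ ha0 (by linarith) (by omega)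
  have hg2 : ∀ t, |deriv (deriv φ) (a * t)| ≤ B * (1 + |t|) ^ m :=
    abs_comp_const_mul_le_of_growth hK₂ ha0 (by linarith) (by omega)
  have hmul : ∀ b u t : ℝ, 0 ≤ b → b ≤ 1 + a + a ^ 2 → |u| ≤ B * (1 + |t|) ^ m →
      |b * u| ≤ (1 + a + a ^ 2) * B * (1 + |t|) ^ m := by
    intro b u t hb hb' hu
    rw [abs_mul, abs_of_nonneg hb, mul_assoc]
    gcongr
  obtain ⟨K, hK, hbound⟩ := exists_abs_gaussian_covariance_sub_le hd1 hd2
    (A := (1 + a + a ^ 2) * B) (k := m)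
    (fun t ↦ by simpa using hmul 1 _ t zero_le_one (by nlinarith) (hg0 t))
    (fun t ↦ hmul a _ t ha0 (by nlinarith) (hg1 t))
    (fun t ↦ hmul (a ^ 2) _ t (sq_nonneg a) (by linarith) (hg2 t))
  have hγ0 := hγ.1
  refine ⟨γ / qs * σα ^ 2 * K, 1, by positivity, one_pos, fun ε hε ↦ ?_⟩
  have h := hbound ε hε
  rw [show ∫ x, (a * deriv φ (a * x)) ^ 2 ∂(gaussianReal 0 1)
      = qs * ∫ x, deriv φ (a * x) ^ 2 ∂(gaussianReal 0 1) by
    simp only [mul_pow, integral_const_mul, ha2]] at h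
  set F := ∫ x, ∫ z, φ (a * x) * φ (a * ((1 - ε) * x + Real.sqrt (1 - (1 - ε) ^ 2) * z))
    ∂(gaussianReal 0 1) ∂(gaussianReal 0 1)
  set E₀ := ∫ x, φ (a * x) ^ 2 ∂(gaussianReal 0 1)
  set E₁ := ∫ x, deriv φ (a * x) ^ 2 ∂(gaussianReal 0 1)
  have hone : 1 = γ / qs * (σα ^ 2 * E₀ + σb ^ 2) := by
    rw [div_mul_eq_mul_div, ← hfix, div_self hqs.ne']
  have hkey : γ / qs * (σα ^ 2 * F + σb ^ 2) - (1 - γ * σα ^ 2 * E₁ * ε)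
      = γ / qs * σα ^ 2 * (F - (E₀ - ε * (qs * E₁))) := by
    have hcancel : γ / qs * qs = γ := div_mul_cancel₀ _ hqs.ne'
    linear_combination (-1 : ℝ) * hone - σα ^ 2 * E₁ * ε * hcancel
  rw [hkey, abs_mul, abs_of_nonneg (by positivity : 0 ≤ γ / qs * σα ^ 2),
    mul_assoc (γ / qs * σα ^ 2)]
  gcongr
end

section
/- Fix N_l, N_{l+1} ∈ ℕ, γ ∈ (0,1], σ_α ≥ 0, q* > 0, and let φ : ℝ → ℝ be continuously differentiable with ∫ (φ′(√q* z))² Dz < ∞. Let δ₁, …, δ_{N_{l+1}} be identically distributed square-integrable random variables with common second moment q̃ := E[δ₁²]; let W₁, …, W_{N_{l+1}} be square-integrable random variables with E[W_k] = 0, E[W_k W_{k′}] = 0 for k ≠ k′, and E[W_k²] = γ σ_α²/N_l for all k, with the vector (W_k) independent of the vector (δ_k); and let h be a random variable with distribution N(0, q*) independent of ((δ_k), (W_k)). Then the random variable δ′ := (Σ_{k=1}^{N_{l+1}} δ_k W_k) φ′(h) satisfies E[(δ′)²] = q̃ · (N_{l+1}/N_l) · γ σ_α² ∫ (φ′(√q*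 z))² Dz = q̃ · (N_{l+1}/N_l) · χ_γ. -/
open MeasureTheory ProbabilityTheory Filter
open scoped NNReal ENNReal

/-- The second moment of `∑ k, X k * Y k` when the families `X` and `Y` are independent and the
`Y k` are pairwise orthogonal. -/
theorem integral_sum_mul_sq_of_indepFun
    {Ω ι : Type*} [MeasurableSpace Ω] [Fintype ι] {μ : Measure Ω} {X Y : ι → Ω → ℝ}
    (hX : ∀ k, MemLp (X k) 2 μ) (hY : ∀ k, MemLp (Y k) 2 μ)
    (hindep : IndepFun (fun ω k => Y k ω) (fun ω k => X k ω) μ)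
    (horth : ∀ k k', k ≠ k' → ∫ ω, Y k ω * Y k' ω ∂μ = 0) :
    ∫ ω, (∑ k, X k ω * Y k ω) ^ 2 ∂μ = ∑ k, (∫ ω, X k ω ^ 2 ∂μ) * ∫ ω, Y k ω ^ 2 ∂μ := by
  classical
  have hXX (k k') : Integrable (fun ω => X k ω * X k' ω) μ := (hX k).integrable_mul (hX k')
  have hYY (k k') : Integrable (fun ω => Y k ω * Y k' ω) μ := (hY k).integrable_mul (hY k')
  have hind (k k') : IndepFun (fun ω => X k ω * X k' ω) (fun ω => Y k ω * Y k' ω) μ :=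
    hindep.symm.comp (φ := fun x : ι → ℝ => x k * x k') (ψ := fun y : ι → ℝ => y k * y k')
      (by fun_prop) (by fun_prop)
  have hprod (k k') : Integrable (fun ω => X k ω * X k' ω * (Y k ω * Y k' ω)) μ :=
    (hind k k').integrable_mul (hXX k k') (hYY k k')
  have hexpand (ω) : (∑ k, X k ω * Y k ω) ^ 2 =
      ∑ k, ∑ k', X k ω * X k' ω * (Y k ω * Y k' ω) := by
    rw [sq, Finset.sum_mul_sum]
    exact Finset.sum_congr rfl fun k _ => Finset.sum_congr rfl fun k' _ => by ring
  simp_rw [hexpand]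
  rw [integral_finsetSum _ fun k _ => integrable_finsetSum _ fun k' _ => hprod k k']
  refine Finset.sum_congr rfl fun k _ => ?_
  rw [integral_finsetSum _ fun k' _ => hprod k k', Finset.sum_eq_single k]
  · rw [(hind k k).integral_fun_mul_eq_mul_integral (hXX k k).1 (hYY k k).1]
    simp only [sq]
  · intro k' _ hk
    rw [(hind k k').integral_fun_mul_eq_mul_integral (hXX k k').1 (hYY k k').1,
      horth k k' hk.symm, mul_zero]
  · simp

/-- A centred Gaussian integral of variance `v` as a standard Gaussian integral. -/
theorem integral_gaussianReal_toNNReal_eq_integral_sqrt_mul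
    {v : ℝ} (hv : 0 ≤ v) {f : ℝ → ℝ} (hf : Measurable f) :
    ∫ x, f x ∂(gaussianReal 0 v.toNNReal) = ∫ z, f (Real.sqrt v * z) ∂(gaussianReal 0 1) := by
  have hmap : (gaussianReal 0 1).map (Real.sqrt v * ·) = gaussianReal 0 v.toNNReal := by
    rw [gaussianReal_map_const_mul, mul_zero, mul_one]
    congr 1
    ext
    simp [Real.sq_sqrt hv, hv]
  rw [← hmap, integral_map (by fun_prop) hf.aestronglyMeasurable]

/-- backpropagation recursion: with δ₁, …, δ_{N_{l+1}} identically
distributed with second moment q̃, uncorrelated weights W_k of mean 0 and second moment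
γσα²/N_l independent of δ, and h ~ N(0, q*) independent of (δ, W), the backpropagated
error δ′ = (Σ_k δ_k W_k) φ′(h) satisfies
E[(δ′)²] = q̃ (N_{l+1}/N_l) γ σα² ∫ (φ′(√q* z))² Dz = q̃ (N_{l+1}/N_l) χ_γ. -/
theorem backprop_recursion
    {Ω : Type*} [MeasurableSpace Ω] (μ : Measure Ω) [IsProbabilityMeasure μ]
    (Nl Nl1 : ℕ) (hNl1 : 0 < Nl1) (γ σα qs : ℝ)
    (hγ : γ ∈ Set.Ioc (0 : ℝ) 1) (hσα : 0 ≤ σα) (hqs : 0 < qs)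
    (φ : ℝ → ℝ) (hφ : ContDiff ℝ 1 φ)
    (hint : Integrable (fun z => (deriv φ (Real.sqrt qs * z)) ^ 2) (gaussianReal 0 1))
    (δ W : Fin Nl1 → Ω → ℝ) (h : Ω → ℝ)
    (hδmeas : ∀ k, Measurable (δ k)) (hWmeas : ∀ k, Measurable (W k))
    (hhmeas : Measurable h)
    (hδdist : ∀ k, Measure.map (δ k) μ = Measure.map (δ ⟨0, hNl1⟩) μ)
    (hδsq : Integrable (fun ω => (δ ⟨0, hNl1⟩ ω) ^ 2) μ)
    (hWsq : ∀ k, Integrable (fun ω => (W k ω) ^ 2) μ)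
    (hWmean : ∀ k, (∫ ω, W k ω ∂μ) = 0)
    (hWuncorr : ∀ k k', k ≠ k' → (∫ ω, W k ω * W k' ω ∂μ) = 0)
    (hWvar : ∀ k, (∫ ω, (W k ω) ^ 2 ∂μ) = γ * σα ^ 2 / Nl)
    (hWδindep : IndepFun (fun ω => (fun k => W k ω : Fin Nl1 → ℝ))
      (fun ω => (fun k => δ k ω : Fin Nl1 → ℝ)) μ)
    (hhdist : Measure.map h μ = gaussianReal 0 (Real.toNNReal qs))
    (hhindep : IndepFun h
      (fun ω => ((fun k => δ k ω : Fin Nl1 → ℝ), (fun k => W k ω : Fin Nl1 → ℝ))) μ) :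
    ∫ ω, ((∑ k, δ k ω * W k ω) * deriv φ (h ω)) ^ 2 ∂μ =
      (∫ ω, (δ ⟨0, hNl1⟩ ω) ^ 2 ∂μ) * ((Nl1 : ℝ) / Nl) *
        (γ * σα ^ 2 * ∫ z, (deriv φ (Real.sqrt qs * z)) ^ 2 ∂(gaussianReal 0 1)) := by
  have hφ' : Measurable (deriv φ) := measurable_deriv φ
  have hident (k) : IdentDistrib (δ k) (δ ⟨0, hNl1⟩) μ μ :=
    ⟨(hδmeas k).aemeasurable, (hδmeas _).aemeasurable, hδdist k⟩
  have hδL2 (k) : MemLp (δ k) 2 μ :=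
    (hident k).symm.memLp_snd
      ((memLp_two_iff_integrable_sq (hδmeas _).aestronglyMeasurable).2 hδsq)
  have hWL2 (k) : MemLp (W k) 2 μ :=
    (memLp_two_iff_integrable_sq (hWmeas k).aestronglyMeasurable).2 (hWsq k)
  have hδmoment (k) : ∫ ω, δ k ω ^ 2 ∂μ = ∫ ω, δ ⟨0, hNl1⟩ ω ^ 2 ∂μ :=
    ((hident k).comp (measurable_id.pow_const 2)).integral_eq
  have hind : IndepFun (fun ω => (∑ k, δ k ω * W k ω) ^ 2) (fun ω => deriv φ (h ω) ^ 2) μ :=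
    hhindep.symm.comp (φ := fun p : (Fin Nl1 → ℝ) × (Fin Nl1 → ℝ) => (∑ k, p.1 k * p.2 k) ^ 2)
      (ψ := fun x => deriv φ x ^ 2) (by fun_prop) (by fun_prop)
  have hgauss : ∫ ω, deriv φ (h ω) ^ 2 ∂μ =
      ∫ z, deriv φ (Real.sqrt qs * z) ^ 2 ∂(gaussianReal 0 1) := by
    rw [← integral_gaussianReal_toNNReal_eq_integral_sqrt_mul hqs.le (hφ'.pow_const 2), ← hhdist,
      integral_map hhmeas.aemeasurable (hφ'.pow_const 2).aestronglyMeasurable]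
  simp_rw [mul_pow]
  rw [hind.integral_fun_mul_eq_mul_integral
      (Measurable.aestronglyMeasurable (by fun_prop))
      (Measurable.aestronglyMeasurable (by fun_prop)),
    integral_sum_mul_sq_of_indepFun hδL2 hWL2 hWδindep hWuncorr, hgauss]
  simp only [hδmoment, hWvar, Finset.sum_const, Finset.card_univ, Fintype.card_fin, nsmul_eq_mul]
  ring
end
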